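/- If M₁ → M₂ is a one-step σπα-reduction of terms, then FV(M₂) ⊑ FV(M₁), where 𝒜 ⊑ ℬ means 𝒜_i ⊆ ⋃_{j ≥ i} ℬ_j for all i ≥ 1; and if s₁ → s₂ is a one-step σπα-reduction of substitutions, then O_{s₂}(𝒜) ⊑ O_{s₁}(𝒜) for every infinite sequence 𝒜 of finite sets of variables. -/

import Mathlib

/- Named terms and substitutions of the λπ-calculus. Variables are natural numbers. -/
mutual
inductive Tm : Type
  | var : ℕ → Tm
  | app : Tm → Tm → Tm
  | lam : ℕ → Tm → Tm
  | clos : Subst → Tm → Tm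
inductive Subst : Type
  | id : Subst
  | pi : ℕ → Subst
  | cons : Subst → Tm → ℕ → Subst
  | comp : Subst → Subst → Subst
end

/- Contexts are lists of variables; the head of the list is the *rightmost* variable,
so the context `Γ, a` of the paper is `a :: Γ`. -/
mutual
/-- `WfTm Γ M` is the judgement `Γ ⊢ M`. -/
inductive WfTm : List ℕ → Tm → Prop
  | var (Γ : List ℕ) (a : ℕ) : WfTm (a :: Γ) (.var a)
  | weak {Γ : List ℕ} {a : ℕ} (b : ℕ) : a ≠ b → WfTm Γ (.var a) → WfTm (b :: Γ) (.var a)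
  | app {Γ M N} : WfTm Γ M → WfTm Γ N → WfTm Γ (.app M N)
  | lam {Γ a M} : WfTm (a :: Γ) M → WfTm Γ (.lam a M)
  | clos {Γ s Δ M} : WfSub Γ s Δ → WfTm Δ M → WfTm Γ (.clos s M)
/-- `WfSub Γ s Δ` is the judgement `Γ ⊢ s ▷ Δ`. -/
inductive WfSub : List ℕ → Subst → List ℕ → Prop
  | id (Γ) : WfSub Γ .id Γ
  | pi (Γ a) : WfSub (a :: Γ) (.pi a) Γ
  | cons {Γ s Δ N} (a) : WfSub Γ s Δ → WfTm Γ N → WfSub Γ (.cons s N a) (a :: Δ)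
  | comp {Γ s Δ q Θ} : WfSub Γ s Δ → WfSub Δ q Θ → WfSub Γ (.comp s q) Θ
end

/-- The operator `O_{λa}` on sequences of finite sets (sequences are 0-indexed:
index `n` corresponds to the paper's index `n+1`). -/
def Olam (a : ℕ) (A : ℕ → Finset ℕ) : ℕ → Finset ℕ
  | 0 => (A 0).erase a ∪ A 1
  | n + 1 => A (n + 2)

/-- The operator `O_π`. -/
def Opi (A : ℕ → Finset ℕ) : ℕ → Finset ℕ
  | 0 => ∅
  | n + 1 => A n

mutual
/-- The free-variable sequence of a term: `FV M n` is the paper's `FV_{n+1}(M)`. -/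
def FV : Tm → ℕ → Finset ℕ
  | .var a => fun n => if n = 0 then {a} else ∅
  | .app M N => fun n => FV M n ∪ FV N n
  | .lam a M => Olam a (FV M)
  | .clos s M => Osub s (FV M)
/-- The operator `O_s` associated with a substitution `s`. -/
def Osub : Subst → (ℕ → Finset ℕ) → (ℕ → Finset ℕ)
  | .id => fun A => A
  | .pi _ => fun A => Opi A
  | .cons s N a => fun A n => Osub s (Olam a A) n ∪ FV N n
  | .comp s q => fun A => Osub s (Osub q A)
end

/-- Iterated abstraction `λΓ.M` (recall the head of the list is the rightmost variable). -/
def lamCtx : List ℕ → Tm → Tm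
  | [], M => M
  | a :: Γ, M => lamCtx Γ (.lam a M)

/-- Free variables of a judgement: `FV(Γ ⊢ M) = FV(λΓ.M)`. -/
def FVJ (Γ : List ℕ) (M : Tm) : ℕ → Finset ℕ := FV (lamCtx Γ M)

/-- Iterated lifting `⇑_Δ(s)`. -/
def Uparrow : List ℕ → Subst → Subst
  | [], s => s
  | a :: Δ, s => .cons (.comp (.pi a) (Uparrow Δ s)) (.var a) a

/- One-step reduction of the λπ-calculus (compatible closure).  The Boolean
parameter tells whether the rule `Beta` is allowed: `StepTm true` is λπ-reduction,
`StepTm false` is σπα-reduction. -/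
mutual
inductive StepTm : Bool → Tm → Tm → Prop
  | beta {a : ℕ} {M N : Tm} :
      StepTm true (.app (.lam a M) N) (.clos (.cons .id N a) M)
  | abs {β : Bool} {s : Subst} {a : ℕ} {M : Tm} :
      StepTm β (.clos s (.lam a M))
        (.lam a (.clos (.cons (.comp (.pi a) s) (.var a) a) M))
  | app {β : Bool} {s : Subst} {M N : Tm} :
      StepTm β (.clos s (.app M N)) (.app (.clos s M) (.clos s N))
  | consVar {β : Bool} {s : Subst} {N : Tm} {a : ℕ} :
      StepTm β (.clos (.cons s N a) (.var a)) N
  | new {β : Bool} {s : Subst} {N : Tm} {a b : ℕ} : a ≠ b →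
      StepTm β (.clos (.cons s N a) (.var b)) (.clos s (.var b))
  | idVar {β : Bool} {a : ℕ} : StepTm β (.clos .id (.var a)) (.var a)
  | clos {β : Bool} {s q : Subst} {M : Tm} :
      StepTm β (.clos s (.clos q M)) (.clos (.comp s q) M)
  | pi1 {β : Bool} {a b : ℕ} : a ≠ b → StepTm β (.clos (.pi a) (.var b)) (.var b)
  | pi2 {β : Bool} {s : Subst} {a b : ℕ} : a ≠ b →
      StepTm β (.clos (.comp s (.pi a)) (.var b)) (.clos s (.var b))
  | alpha1 {β : Bool} {a b : ℕ} {M : Tm} :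
      (∃ i, a ∈ FV (.lam a M) i) → (∀ i, b ∉ FV (.lam a M) i) →
      StepTm β (.lam a M) (.lam b (.clos (.cons (.pi b) (.var b) a) M))
  | lamCong {β : Bool} {a : ℕ} {M₁ M₂ : Tm} :
      StepTm β M₁ M₂ → StepTm β (.lam a M₁) (.lam a M₂)
  | appL {β : Bool} {M₁ M₂ N : Tm} : StepTm β M₁ M₂ → StepTm β (.app M₁ N) (.app M₂ N)
  | appR {β : Bool} {M N₁ N₂ : Tm} : StepTm β N₁ N₂ → StepTm β (.app M N₁) (.app M N₂)
  | closL {β : Bool} {s₁ s₂ : Subst} {M : Tm} :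
      StepSub β s₁ s₂ → StepTm β (.clos s₁ M) (.clos s₂ M)
  | closR {β : Bool} {s : Subst} {M₁ M₂ : Tm} :
      StepTm β M₁ M₂ → StepTm β (.clos s M₁) (.clos s M₂)
inductive StepSub : Bool → Subst → Subst → Prop
  | ass {β : Bool} {s q r : Subst} :
      StepSub β (.comp s (.comp q r)) (.comp (.comp s q) r)
  | idR {β : Bool} {s : Subst} : StepSub β (.comp s .id) s
  | idShift {β : Bool} {a : ℕ} : StepSub β (.comp .id (.pi a)) (.pi a)
  | consShift {β : Bool} {s : Subst} {N : Tm} {a : ℕ} :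
      StepSub β (.comp (.cons s N a) (.pi a)) s
  | map {β : Bool} {s q : Subst} {N : Tm} {a : ℕ} :
      StepSub β (.comp s (.cons q N a)) (.cons (.comp s q) (.clos s N) a)
  | consL {β : Bool} {s₁ s₂ : Subst} {N : Tm} {a : ℕ} :
      StepSub β s₁ s₂ → StepSub β (.cons s₁ N a) (.cons s₂ N a)
  | consR {β : Bool} {s : Subst} {N₁ N₂ : Tm} {a : ℕ} :
      StepTm β N₁ N₂ → StepSub β (.cons s N₁ a) (.cons s N₂ a)
  | compL {β : Bool} {s₁ s₂ q : Subst} :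
      StepSub β s₁ s₂ → StepSub β (.comp s₁ q) (.comp s₂ q)
  | compR {β : Bool} {s q₁ q₂ : Subst} :
      StepSub β q₁ q₂ → StepSub β (.comp s q₁) (.comp s q₂)
end

/-- One-step reduction `⇝` on judgements `Γ ⊢ M`, including the rule `α₂`.
`StepJ true` is λπ, `StepJ false` is σπα. -/
inductive StepJ (β : Bool) : List ℕ × Tm → List ℕ × Tm → Prop
  | step {Γ : List ℕ} {M₁ M₂ : Tm} : StepTm β M₁ M₂ → StepJ β (Γ, M₁) (Γ, M₂)
  | alpha2 {Γ Δ : List ℕ} {a b : ℕ} {M : Tm} :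
      (∃ i, a ∈ FVJ (Δ ++ [a]) M i) → (∀ i, b ∉ FVJ (Δ ++ [a]) M i) →
      StepJ β (Δ ++ a :: Γ, M)
        (Δ ++ b :: Γ, .clos (Uparrow Δ (.cons (.pi b) (.var b) a)) M)

/- Name-free (de Bruijn) terms and substitutions. -/
mutual
inductive NTm : Type
  | one : NTm
  | app : NTm → NTm → NTm
  | lam : NTm → NTm
  | clos : NSub → NTm → NTm
inductive NSub : Type
  | id : NSub
  | pi : NSub
  | cons : NSub → NTm → NSub
  | comp : NSub → NSub → NSub
end

/-- `piIter n` is the left-nested composition of `n+1` copies of `π`. -/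
def piIter : ℕ → NSub
  | 0 => .pi
  | k + 1 => .comp (piIter k) .pi

/-- `dbr n` is the de Bruijn index `n+1̲`: `dbr 0 = 1` and
`dbr (n+1) = ((…(π∘π)∘…)∘π)∘1` with `n+1` occurrences of `π`. -/
def dbr : ℕ → NTm
  | 0 => .one
  | n + 1 => .clos (piIter n) .one

/- One-step reduction of λσ (`NStepTm true`) resp. σ (`NStepTm false`)
on name-free terms/substitutions. -/
mutual
inductive NStepTm : Bool → NTm → NTm → Prop
  | beta {U V : NTm} : NStepTm true (.app (.lam U) V) (.clos (.cons .id V) U)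
  | abs {β : Bool} {u : NSub} {U : NTm} :
      NStepTm β (.clos u (.lam U)) (.lam (.clos (.cons (.comp .pi u) .one) U))
  | app {β : Bool} {u : NSub} {U V : NTm} :
      NStepTm β (.clos u (.app U V)) (.app (.clos u U) (.clos u V))
  | consVar {β : Bool} {u : NSub} {V : NTm} : NStepTm β (.clos (.cons u V) .one) V
  | idVar {β : Bool} : NStepTm β (.clos .id .one) .one
  | clos {β : Bool} {u v : NSub} {U : NTm} :
      NStepTm β (.clos u (.clos v U)) (.clos (.comp u v) U)
  | lamCong {β : Bool} {U₁ U₂ : NTm} : NStepTm β U₁ U₂ → NStepTm β (.lam U₁) (.lam U₂)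
  | appL {β : Bool} {U₁ U₂ V : NTm} : NStepTm β U₁ U₂ → NStepTm β (.app U₁ V) (.app U₂ V)
  | appR {β : Bool} {U V₁ V₂ : NTm} : NStepTm β V₁ V₂ → NStepTm β (.app U V₁) (.app U V₂)
  | closL {β : Bool} {u₁ u₂ : NSub} {U : NTm} :
      NStepSub β u₁ u₂ → NStepTm β (.clos u₁ U) (.clos u₂ U)
  | closR {β : Bool} {u : NSub} {U₁ U₂ : NTm} :
      NStepTm β U₁ U₂ → NStepTm β (.clos u U₁) (.clos u U₂)
inductive NStepSub : Bool → NSub → NSub → Prop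
  | ass {β : Bool} {u v w : NSub} : NStepSub β (.comp u (.comp v w)) (.comp (.comp u v) w)
  | idR {β : Bool} {u : NSub} : NStepSub β (.comp u .id) u
  | idShift {β : Bool} : NStepSub β (.comp .id .pi) .pi
  | consShift {β : Bool} {u : NSub} {V : NTm} : NStepSub β (.comp (.cons u V) .pi) u
  | map {β : Bool} {u v : NSub} {V : NTm} :
      NStepSub β (.comp u (.cons v V)) (.cons (.comp u v) (.clos u V))
  | consL {β : Bool} {u₁ u₂ : NSub} {V : NTm} :
      NStepSub β u₁ u₂ → NStepSub β (.cons u₁ V) (.cons u₂ V)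
  | consR {β : Bool} {u : NSub} {V₁ V₂ : NTm} :
      NStepTm β V₁ V₂ → NStepSub β (.cons u V₁) (.cons u V₂)
  | compL {β : Bool} {u₁ u₂ v : NSub} :
      NStepSub β u₁ u₂ → NStepSub β (.comp u₁ v) (.comp u₂ v)
  | compR {β : Bool} {u v₁ v₂ : NSub} :
      NStepSub β v₁ v₂ → NStepSub β (.comp u v₁) (.comp u v₂)
end

/- The correspondence `(Γ ⊢ M) ⟹ U` resp. `(Γ ⊢ s ▷ Δ) ⟹ u` between judgements and
name-free terms/substitutions (Definition 7.6 of the paper). -/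
mutual
inductive TrTm : List ℕ → Tm → NTm → Prop
  | var (Γ : List ℕ) (a : ℕ) : TrTm (a :: Γ) (.var a) (dbr 0)
  | weak {Γ : List ℕ} {a : ℕ} {n : ℕ} (b : ℕ) : a ≠ b →
      TrTm Γ (.var a) (dbr n) → TrTm (b :: Γ) (.var a) (dbr (n + 1))
  | app {Γ M N U V} : TrTm Γ M U → TrTm Γ N V → TrTm Γ (.app M N) (.app U V)
  | lam {Γ a M U} : TrTm (a :: Γ) M U → TrTm Γ (.lam a M) (.lam U)
  | clos {Γ s Δ M u U} : TrSub Γ s Δ u → TrTm Δ M U → TrTm Γ (.clos s M) (.clos u U)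
inductive TrSub : List ℕ → Subst → List ℕ → NSub → Prop
  | id (Γ) : TrSub Γ .id Γ .id
  | pi (Γ a) : TrSub (a :: Γ) (.pi a) Γ .pi
  | cons {Γ s Δ N u V} (a) : TrSub Γ s Δ u → TrTm Γ N V →
      TrSub Γ (.cons s N a) (a :: Δ) (.cons u V)
  | comp {Γ s Δ q Θ u v} : TrSub Γ s Δ u → TrSub Δ q Θ v →
      TrSub Γ (.comp s q) Θ (.comp u v)
end


def Sq (A B : ℕ → Finset ℕ) : Prop := ∀ i x : ℕ, x ∈ A i → ∃ j, i ≤ j ∧ x ∈ B j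

theorem Sq.of_eq {A B : ℕ → Finset ℕ} (h : A = B) : Sq A B := by
  subst h
  exact fun i x hx => ⟨i, le_refl _, hx⟩

theorem Sq.union {A B C D : ℕ → Finset ℕ} (h : Sq A B) (k : Sq C D) :
    Sq (fun n => A n ∪ C n) (fun n => B n ∪ D n) := by
  intro i x hx
  rcases Finset.mem_union.1 hx with hx | hx
  · obtain ⟨j, hj, hm⟩ := h i x hx
    exact ⟨j, hj, Finset.mem_union_left _ hm⟩
  · obtain ⟨j, hj, hm⟩ := k i x hx
    exact ⟨j, hj, Finset.mem_union_right _ hm⟩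

theorem Sq.olam (a : ℕ) {A B : ℕ → Finset ℕ} (h : Sq A B) : Sq (Olam a A) (Olam a B) := by
  have key : ∀ j x, x ∈ B (j + 1) → x ∈ Olam a B j := by
    intro j x hx
    cases j with
    | zero => exact Finset.mem_union_right _ hx
    | succ j => exact hx
  intro i x hx
  cases i with
  | zero =>
    rcases Finset.mem_union.1 hx with hx | hx
    · obtain ⟨hne, hx⟩ := Finset.mem_erase.1 hx
      obtain ⟨j, hj, hm⟩ := h 0 x hx
      cases j with
      | zero => exact ⟨0, le_refl _, Finset.mem_union_left _ (Finset.mem_erase.2 ⟨hne, hm⟩)⟩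
      | succ j => exact ⟨j, Nat.zero_le _, key j x hm⟩
    · obtain ⟨j, hj, hm⟩ := h 1 x hx
      cases j with
      | zero => omega
      | succ j => exact ⟨j, Nat.zero_le _, key j x hm⟩
  | succ i =>
    obtain ⟨j, hj, hm⟩ := h (i + 2) x hx
    cases j with
    | zero => omega
    | succ j => exact ⟨j, by omega, key j x hm⟩

theorem Sq.opi {A B : ℕ → Finset ℕ} (h : Sq A B) : Sq (Opi A) (Opi B) := by
  intro i x hx
  cases i with
  | zero => simp [Opi] at hx
  | succ i =>
    obtain ⟨j, hj, hm⟩ := h i x hx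
    exact ⟨j + 1, by omega, hm⟩

theorem Sq.osub : ∀ (s : Subst) {A B : ℕ → Finset ℕ}, Sq A B → Sq (Osub s A) (Osub s B)
  | .id, A, B, h => by simpa only [Osub] using h
  | .pi _, A, B, h => by simpa only [Osub] using h.opi
  | .cons s N a, A, B, h => by
    simpa only [Osub] using (Sq.osub s (h.olam a)).union (Sq.of_eq rfl)
  | .comp s q, A, B, h => by
    simpa only [Osub] using Sq.osub s (Sq.osub q h)

theorem olam_union (a : ℕ) (A B : ℕ → Finset ℕ) :
    Olam a (fun n => A n ∪ B n) = fun n => Olam a A n ∪ Olam a B n := by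
  funext n
  cases n with
  | zero => ext x; simp [Olam]; tauto
  | succ n => rfl

theorem opi_union (A B : ℕ → Finset ℕ) :
    Opi (fun n => A n ∪ B n) = fun n => Opi A n ∪ Opi B n := by
  funext n
  cases n with
  | zero => simp [Opi]
  | succ n => rfl

theorem osub_union : ∀ (s : Subst) (A B : ℕ → Finset ℕ),
    Osub s (fun n => A n ∪ B n) = fun n => Osub s A n ∪ Osub s B n
  | .id, A, B => by simp only [Osub]
  | .pi _, A, B => by simp only [Osub, opi_union]
  | .cons s N a, A, B => by
    simp only [Osub, olam_union, osub_union s]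
    funext n
    ext x
    simp only [Finset.mem_union]
    tauto
  | .comp s q, A, B => by
    simp only [Osub, osub_union q, osub_union s]

theorem olam_opi_union (b : ℕ) (C : ℕ → Finset ℕ) :
    Olam b (fun n => Opi C n ∪ FV (.var b) n) = C := by
  funext n
  match n with
  | 0 => simp [Olam, Opi, FV]
  | 1 => simp [Olam, Opi, FV]
  | n + 2 => simp [Olam, Opi, FV]

theorem olam_opi (b : ℕ) (C : ℕ → Finset ℕ) : Olam b (Opi C) = C := by
  funext n
  cases n <;> simp [Olam, Opi]

theorem olam_var {a b : ℕ} (h : a ≠ b) : Olam a (FV (.var b)) = FV (.var b) := by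
  funext n
  cases n with
  | zero => simp [Olam, FV, h]
  | succ n => simp [Olam, FV]

theorem sq_opi (A : ℕ → Finset ℕ) : Sq A (Opi A) :=
  fun i _ hx => ⟨i + 1, by omega, hx⟩

mutual
theorem sqTm : ∀ {M₁ M₂ : Tm}, StepTm false M₁ M₂ → Sq (FV M₂) (FV M₁)
  | _, _, .abs => Sq.of_eq (by simp only [FV, Osub]; simpa only [FV] using olam_opi_union _ _)
  | _, _, .app => Sq.of_eq (by simp only [FV, osub_union])
  | _, _, .consVar => fun i x hx => ⟨i, le_refl _, by
      simp only [FV, Osub]; exact Finset.mem_union_right _ hx⟩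
  | _, _, .new (b := b) h => fun i x hx => ⟨i, le_refl _, by
      rw [FV, Osub]; beta_reduce; rw [olam_var h]; rw [FV] at hx; exact Finset.mem_union_left _ hx⟩
  | _, _, .idVar => Sq.of_eq (by simp only [FV, Osub])
  | _, _, .clos => Sq.of_eq (by simp only [FV, Osub])
  | _, _, .pi1 (b := b) _ => by
      rw [FV.eq_def (.clos _ _)]; simp only [Osub]; exact sq_opi _
  | _, _, .pi2 (s := s) _ => by
      rw [FV.eq_def (.clos _ _), FV.eq_def (.clos (.comp _ _) _)]
      simp only [Osub]; exact Sq.osub s (sq_opi _)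
  | _, _, .alpha1 _ _ => Sq.of_eq (by simp only [FV, Osub]; simpa only [FV] using olam_opi_union _ _)
  | _, _, .lamCong h => by simpa only [FV] using (sqTm h).olam _
  | _, _, .appL h => by simpa only [FV] using (sqTm h).union (Sq.of_eq rfl)
  | _, _, .appR h => by simpa only [FV] using (Sq.of_eq rfl).union (sqTm h)
  | _, _, .closL h => by simpa only [FV] using sqSub h _
  | _, _, .closR h => by simpa only [FV] using Sq.osub _ (sqTm h)
theorem sqSub : ∀ {s₁ s₂ : Subst}, StepSub false s₁ s₂ →
    ∀ A : ℕ → Finset ℕ, Sq (Osub s₂ A) (Osub s₁ A)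
  | _, _, .ass, A => Sq.of_eq (by simp only [Osub])
  | _, _, .idR, A => Sq.of_eq (by simp only [Osub])
  | _, _, .idShift, A => Sq.of_eq (by simp only [Osub])
  | _, _, .consShift, A => fun i x hx => ⟨i, le_refl _, by
      simp only [Osub, olam_opi]; exact Finset.mem_union_left _ hx⟩
  | _, _, .map, A => Sq.of_eq (by simp only [Osub, FV, osub_union])
  | _, _, .consL h, A => by simpa only [Osub] using (sqSub h _).union (Sq.of_eq rfl)
  | _, _, .consR h, A => by simpa only [Osub] using (Sq.of_eq rfl).union (sqTm h)
  | _, _, .compL h, A => by simpa only [Osub] using sqSub h _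
  | _, _, .compR h, A => by simpa only [Osub] using Sq.osub _ (sqSub h A)
end

/-- one-step σπα-reduction decreases `FV` w.r.t. `⊑`, where
`𝒜 ⊑ ℬ` means `𝒜_i ⊆ ⋃_{j ≥ i} ℬ_j` for all `i`. -/
theorem step_FV_sqsubseteq :
    (∀ (M₁ M₂ : Tm), StepTm false M₁ M₂ →
      ∀ (i : ℕ) (x : ℕ), x ∈ FV M₂ i → ∃ j, i ≤ j ∧ x ∈ FV M₁ j) ∧
    (∀ (s₁ s₂ : Subst), StepSub false s₁ s₂ →
      ∀ (A : ℕ → Finset ℕ) (i : ℕ) (x : ℕ), x ∈ Osub s₂ A i → ∃ j, i ≤ j ∧ x ∈ Osub s₁ A j) := by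
  exact ⟨fun _ _ h => sqTm h, fun _ _ h A => sqSub h A⟩
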